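/- With the notation of the iterated integrals Ω at φ = π/4, one has Ω_{2,1,1,1} = (iπ³/12)·log 2 − (iπ/6)·(log 2)³ − (iπ/4)·ζ(3). -/

import Mathlib

noncomputable section

/-- `p₁ = e^{iπ/4}` -/
def p₁ : ℂ := Complex.exp (Complex.I * ((Real.pi : ℂ) / 4))
/-- `p₂ = -e^{-iπ/4}` -/
def p₂ : ℂ := -Complex.exp (-(Complex.I * ((Real.pi : ℂ) / 4)))
/-- `p₃ = -p₁` -/
def p₃ : ℂ := -p₁
/-- `p₄ = -p₂` -/
def p₄ : ℂ := -p₂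

def F₁ (z : ℂ) : ℂ := 1 / (z - p₁) - 1 / (z - p₂) + 1 / (z - p₃) - 1 / (z - p₄)

def F₂ (z : ℂ) : ℂ := 1 / (z - p₁) - 1 / (z - p₂) - 1 / (z - p₃) + 1 / (z - p₄)

def F₃ (z : ℂ) : ℂ := 1 / (z - p₁) + 1 / (z - p₂) - 1 / (z - p₃) - 1 / (z - p₄)

/-- Iterated integral along `[0, z]`:
`Omega [F_{i₁}, …, F_{iₙ}] z = Ω_{i₁,…,iₙ}(z)`, defined recursively by
`Ω_{i₁,…,i_k}(z) = ∫₀ᶻ Ω_{i₁,…,i_{k-1}}(t) · F_{i_k}(t) dt`, with `Ω_∅ ≡ 1`. -/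
def Omega (fs : List (ℂ → ℂ)) : ℝ → ℂ :=
  fs.foldl (fun g f => fun z => ∫ t in (0:ℝ)..z, g t * f (t : ℂ)) (fun _ => 1)

open MeasureTheory Filter Topology

lemma p1_eq : p₁ = ((√2 / 2 : ℝ) : ℂ) * (1 + Complex.I) := by
  unfold p₁
  have : Complex.I * ((Real.pi : ℂ) / 4) = ((Real.pi / 4 : ℝ) : ℂ) * Complex.I := by
    push_cast; ring
  rw [this, Complex.exp_mul_I, ← Complex.ofReal_cos, ← Complex.ofReal_sin, Real.cos_pi_div_four,
    Real.sin_pi_div_four]; ring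

lemma p2_eq : p₂ = -(((√2 / 2 : ℝ) : ℂ) * (1 - Complex.I)) := by
  unfold p₂
  have : -(Complex.I * ((Real.pi : ℂ) / 4)) = ((-(Real.pi / 4) : ℝ) : ℂ) * Complex.I := by
    push_cast; ring
  rw [this, Complex.exp_mul_I, ← Complex.ofReal_cos, ← Complex.ofReal_sin, Real.cos_neg,
    Real.sin_neg, Real.cos_pi_div_four, Real.sin_pi_div_four]; push_cast; ring

lemma sqrt2C : ((√2 : ℝ) : ℂ) ^ 2 = 2 := by
  rw [← Complex.ofReal_pow, Real.sq_sqrt (by norm_num)]; norm_num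

lemma ne_aux (t : ℝ) (a b : ℝ) (hb : b ≠ 0) : (t : ℂ) - (a + b * Complex.I) ≠ 0 := by
  intro h
  have := congrArg Complex.im h
  simp at this
  exact hb this

lemma ne_all (t : ℝ) : (t : ℂ) - p₁ ≠ 0 ∧ (t : ℂ) - p₂ ≠ 0 ∧ (t : ℂ) - p₃ ≠ 0 ∧
    (t : ℂ) - p₄ ≠ 0 := by
  have h2 : √2 / 2 ≠ 0 := by positivity
  have h2' : -(√2 / 2) ≠ 0 := by simp
  refine ⟨?_, ?_, ?_, ?_⟩
  · convert ne_aux t (√2/2) (√2/2) h2 using 2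
    rw [p1_eq]; push_cast; ring
  · convert ne_aux t (-(√2/2)) (√2/2) h2 using 2
    rw [p2_eq]; push_cast; ring
  · convert ne_aux t (-(√2/2)) (-(√2/2)) h2' using 2
    rw [p₃, p1_eq]; push_cast; ring
  · convert ne_aux t ((√2/2)) (-(√2/2)) h2' using 2
    rw [p₄, p2_eq]; push_cast; ring

lemma t4_ne (t : ℝ) : (1 + (t : ℂ) ^ 4) ≠ 0 := by
  have : (1 + t ^ 4 : ℝ) ≠ 0 := by positivity
  exact_mod_cast this

lemma p_sq : p₁ ^ 2 = Complex.I ∧ p₂ ^ 2 = -Complex.I := by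
  have := sqrt2C
  have hI := Complex.I_sq
  rw [p1_eq, p2_eq]; push_cast
  constructor
  · linear_combination (1 + Complex.I) ^ 2 / 4 * this + hI / 2
  · linear_combination (1 - Complex.I) ^ 2 / 4 * this + hI / 2

lemma F1_eq (t : ℝ) : F₁ t = 2 * Complex.I * (2 * t / (1 + t ^ 4) : ℝ) := by
  obtain ⟨h1, h2, h3, h4⟩ := ne_all t
  have h5 := t4_ne t
  obtain ⟨q1, q2⟩ := p_sq
  have hI := Complex.I_sq
  have e : (1 + (t:ℂ) ^ 4) = ((t:ℂ) - p₁) * (t - p₂) * (t - p₃) * (t - p₄) := by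
    unfold p₃ p₄
    have : ((t:ℂ) - p₁) * (t - p₂) * (t - -p₁) * (t - -p₂) = (t ^ 2 - p₁ ^ 2) * (t ^ 2 - p₂ ^ 2) := by ring
    rw [this, q1, q2]; linear_combination hI
  unfold F₁
  push_cast
  rw [e]
  field_simp
  unfold p₃ p₄
  have : p₁ ^ 2 - p₂ ^ 2 = 2 * Complex.I := by rw [q1, q2]; ring
  linear_combination 2 * t * this

lemma F2_eq (t : ℝ) : F₂ t = (-(2 * √2 * ((1 - t ^ 2) / (1 + t ^ 4))) : ℝ) := by
  obtain ⟨h1, h2, h3, h4⟩ := ne_all t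
  have h5 := t4_ne t
  obtain ⟨q1, q2⟩ := p_sq
  have hI := Complex.I_sq
  have e : (1 + (t:ℂ) ^ 4) = ((t:ℂ) - p₁) * (t - p₂) * (t - p₃) * (t - p₄) := by
    unfold p₃ p₄
    have : ((t:ℂ) - p₁) * (t - p₂) * (t - -p₁) * (t - -p₂) = (t ^ 2 - p₁ ^ 2) * (t ^ 2 - p₂ ^ 2) := by ring
    rw [this, q1, q2]; linear_combination hI
  unfold F₂
  push_cast
  rw [e]
  field_simp
  unfold p₃ p₄
  have e1 : p₁ - p₂ = (√2:ℝ) := by rw [p1_eq, p2_eq]; push_cast; ring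
  have e2 : p₁ * p₂ = -1 := by
    rw [p1_eq, p2_eq]; push_cast; linear_combination -(1 - Complex.I^2)/4 * sqrt2C + hI/2
  have : ((t:ℂ) - p₂) * (t - -p₁) * (t - -p₂) - (t - p₁) * (t - -p₁) * (t - -p₂)
     - (t - p₁) * (t - p₂) * (t - -p₂) + (t - p₁) * (t - p₂) * (t - -p₁) =
     2 * (p₁ - p₂) * (t ^ 2 + p₁ * p₂) := by ring
  rw [e1, e2] at this
  linear_combination this

lemma cont_F1 : Continuous (fun t : ℝ => F₁ t) := by
  simp_rw [F1_eq]
  have : ∀ t : ℝ, 1 + t ^ 4 ≠ 0 := fun t => by positivity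
  fun_prop (disch := assumption)

lemma cont_F2 : Continuous (fun t : ℝ => F₂ t) := by
  simp_rw [F2_eq]
  have : ∀ t : ℝ, 1 + t ^ 4 ≠ 0 := fun t => by positivity
  fun_prop (disch := assumption)

def BB (t : ℝ) : ℂ := 2 * Complex.I * ((Real.pi / 4 - Real.arctan (t ^ 2) : ℝ) : ℂ)

lemma BB_deriv (t : ℝ) : HasDerivAt BB (-F₁ t) t := by
  have h1 : HasDerivAt (fun t : ℝ => Real.pi / 4 - Real.arctan (t ^ 2)) (-(2 * t / (1 + t ^ 4))) t := by
    have h := ((hasDerivAt_pow 2 t).arctan).const_sub (Real.pi / 4)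
    refine h.congr_deriv ?_
    have e : (t ^ 2) ^ 2 = t ^ 4 := by ring
    rw [e]
    push_cast
    ring
  have h2 := h1.ofReal_comp.const_mul (2 * Complex.I)
  refine h2.congr_deriv ?_
  rw [F1_eq]; push_cast; ring

lemma prim_deriv {f : ℝ → ℂ} (hf : Continuous f) (x : ℝ) :
    HasDerivAt (fun z => ∫ t in (0:ℝ)..z, f t) (f x) x :=
  intervalIntegral.integral_hasDerivAt_right (hf.intervalIntegrable _ _)
    (hf.stronglyMeasurableAtFilter _ _) hf.continuousAt

lemma Omega_eq : Omega [F₂, F₁, F₁, F₁] 1 =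
    ∫ t in (0:ℝ)..1, F₂ t * (BB t) ^ 3 / 6 := by
  have hF1 := cont_F1
  have hF2 := cont_F2
  simp only [Omega, List.foldl, one_mul]
  set u : ℝ → ℂ := fun z => ∫ t in (0:ℝ)..z, F₂ t with hu
  have du : ∀ x : ℝ, HasDerivAt u (F₂ x) x := prim_deriv hF2
  have cu : Continuous u := continuous_iff_continuousAt.2 fun x => (du x).continuousAt
  set u1 : ℝ → ℂ := fun z => ∫ t in (0:ℝ)..z, u t * F₁ t with hu1
  have du1 : ∀ x : ℝ, HasDerivAt u1 (u x * F₁ x) x := prim_deriv (cu.mul hF1)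
  have cu1 : Continuous u1 := continuous_iff_continuousAt.2 fun x => (du1 x).continuousAt
  set u2 : ℝ → ℂ := fun z => ∫ t in (0:ℝ)..z, u1 t * F₁ t with hu2
  have du2 : ∀ x : ℝ, HasDerivAt u2 (u1 x * F₁ x) x := prim_deriv (cu1.mul hF1)
  have cu2 : Continuous u2 := continuous_iff_continuousAt.2 fun x => (du2 x).continuousAt
  have cB : Continuous BB := continuous_iff_continuousAt.2 fun x => (BB_deriv x).continuousAt
  have key : ∀ x : ℝ, HasDerivAt (fun x => u2 x * BB x + u1 x * BB x ^ 2 / 2 + u x * BB x ^ 3 / 6)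
      (F₂ x * BB x ^ 3 / 6 - u2 x * F₁ x) x := by
    intro x
    have hB := BB_deriv x
    have := (((du2 x).mul hB).add (((du1 x).mul (hB.pow 2)).div_const 2)).add
      (((du x).mul (hB.pow 3)).div_const 6)
    refine this.congr_deriv ?_
    push_cast
    simp only [Pi.pow_apply]
    ring
  have ci : Continuous fun x : ℝ => F₂ x * BB x ^ 3 / 6 := by fun_prop
  have ci2 : Continuous fun x : ℝ => u2 x * F₁ x := by fun_prop
  have := intervalIntegral.integral_eq_sub_of_hasDerivAt (a := 0) (b := 1) (fun x _ => key x)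
    ((ci.sub ci2).intervalIntegrable _ _)
  rw [intervalIntegral.integral_sub (ci.intervalIntegrable _ _) (ci2.intervalIntegrable _ _)] at this
  have b1 : BB 1 = 0 := by simp [BB]
  have z0 : u 0 = 0 := by simp [hu]
  have z1 : u1 0 = 0 := by simp [hu1]
  have z2 : u2 0 = 0 := by simp [hu2]
  rw [b1, z0, z1, z2] at this
  simp only [ne_eq, OfNat.ofNat_ne_zero, not_false_eq_true, zero_pow, mul_zero, zero_mul, zero_div, add_zero, sub_zero] at this
  exact (sub_eq_zero.1 this).symm

lemma Omega_eq2 : Omega [F₂, F₁, F₁, F₁] 1 = Complex.I *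
    ((8 * √2 / 3 * ∫ t in (0:ℝ)..1, (1 - t ^ 2) / (1 + t ^ 4) * (Real.pi / 4 - Real.arctan (t ^ 2)) ^ 3 : ℝ) : ℂ) := by
  rw [Omega_eq, ← intervalIntegral.integral_const_mul, ← intervalIntegral.integral_ofReal,
    ← intervalIntegral.integral_const_mul]
  congr 1; ext t
  rw [F2_eq, BB]
  push_cast
  have : Complex.I ^ 3 = -Complex.I := Complex.I_pow_three
  simp only [mul_pow, this]
  ring

lemma subst_t : 8 * √2 * ∫ t in (0:ℝ)..1, (1 - t ^ 2) / (1 + t ^ 4) * (Real.pi / 4 - Real.arctan (t ^ 2)) ^ 3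
    = ∫ θ in (0:ℝ)..(Real.pi / 2), θ ^ 3 * Real.sin (θ / 2) / √(2 * Real.cos θ) := by
  set g : ℝ → ℝ := fun θ => θ ^ 3 * Real.sin (θ / 2) / √(2 * Real.cos θ) with hg
  have hd : ∀ t : ℝ, HasDerivAt (fun t : ℝ => Real.pi / 2 - 2 * Real.arctan (t ^ 2)) (-(4 * t / (1 + t ^ 4))) t := by
    intro t
    have h := (((hasDerivAt_pow 2 t).arctan).const_mul 2).const_sub (Real.pi / 2)
    refine h.congr_deriv ?_
    have e : (t ^ 2) ^ 2 = t ^ 4 := by ring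
    rw [e]
    push_cast
    ring
  have key := intervalIntegral.integral_comp_mul_deriv_of_deriv_nonpos (a := 0) (b := 1) (g := g)
    (f := fun t : ℝ => Real.pi / 2 - 2 * Real.arctan (t ^ 2))
    (f' := fun t : ℝ => -(4 * t / (1 + t ^ 4)))
    (fun x _ => (hd x).continuousAt.continuousWithinAt) (fun x _ => hd x) (by
      intro x hx
      rw [min_eq_left (by norm_num : (0:ℝ) ≤ 1)] at hx
      have := hx.1
      simp only [Left.neg_nonpos_iff]
      positivity)
  have e1 : Real.pi / 2 - 2 * Real.arctan ((1:ℝ) ^ 2) = 0 := by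
    rw [one_pow, Real.arctan_one]; ring
  have e0 : Real.pi / 2 - 2 * Real.arctan ((0:ℝ) ^ 2) = Real.pi / 2 := by simp
  simp only [e1, e0] at key
  rw [intervalIntegral.integral_symm (Real.pi / 2) 0, ← key, ← intervalIntegral.integral_neg,
    ← intervalIntegral.integral_const_mul]
  apply intervalIntegral.integral_congr_ae
  refine Eventually.of_forall fun t ht => ?_
  rw [Set.uIoc_of_le (by norm_num)] at ht
  have ht0 := ht.1
  simp only [hg, Function.comp]
  have hc : Real.cos (Real.pi / 2 - 2 * Real.arctan (t ^ 2)) = 2 * t ^ 2 / (1 + t ^ 4) := by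
    rw [Real.cos_pi_div_two_sub, Real.sin_two_mul, Real.sin_arctan, Real.cos_arctan]
    have : √(1 + (t ^ 2) ^ 2) ^ 2 = 1 + t ^ 4 := by
      rw [Real.sq_sqrt (by positivity)]; ring
    rw [← this]
    field_simp
  have hs : Real.sin ((Real.pi / 2 - 2 * Real.arctan (t ^ 2)) / 2) = √2 / 2 * (1 - t ^ 2) / √(1 + t ^ 4) := by
    have : (Real.pi / 2 - 2 * Real.arctan (t ^ 2)) / 2 = Real.pi / 4 - Real.arctan (t ^ 2) := by ring
    rw [this, Real.sin_sub, Real.sin_arctan, Real.cos_arctan, Real.sin_pi_div_four, Real.cos_pi_div_four]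
    have e : (t ^ 2) ^ 2 = t ^ 4 := by ring
    rw [e]
    ring
  rw [hc, hs]
  have hq : √(2 * (2 * t ^ 2 / (1 + t ^ 4))) = 2 * t / √(1 + t ^ 4) := by
    have : 2 * (2 * t ^ 2 / (1 + t ^ 4)) = (2 * t) ^ 2 / (1 + t ^ 4) := by ring
    rw [this, Real.sqrt_div (by positivity), Real.sqrt_sq (by positivity)]
  rw [hq]
  have : √(1 + t ^ 4) ≠ 0 := by positivity
  have : (1 + t ^ 4) ≠ 0 := by positivity
  field_simp
  ring

lemma intg_s : IntervalIntegrable (fun α : ℝ => (Real.sin (α / 2)) ^ (-(1/2) : ℝ)) volume 0 (2 * Real.pi) := by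
  have hpi := Real.pi_pos
  have h1 : IntervalIntegrable (fun α : ℝ => (α / Real.pi) ^ (-(1/2) : ℝ)) volume 0 (2 * Real.pi) := by
    have := (intervalIntegral.intervalIntegrable_rpow' (a := 0) (b := 2) (r := -(1/2)) (by norm_num)).comp_mul_right (c := Real.pi⁻¹) (by simp)
    simpa [div_eq_mul_inv] using this
  have h2 : IntervalIntegrable (fun α : ℝ => ((2 * Real.pi - α) / Real.pi) ^ (-(1/2) : ℝ)) volume 0 (2 * Real.pi) := by
    have := (h1.comp_sub_left (2 * Real.pi)).symm
    simpa using this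
  refine (h1.add h2).mono_fun' ?_ ?_
  · refine Measurable.aestronglyMeasurable ?_
    fun_prop
  · rw [Set.uIoc_of_le (by positivity)]
    refine (ae_restrict_iff' measurableSet_Ioc).2 (Eventually.of_forall fun α hα => ?_)
    have hs : 0 ≤ Real.sin (α / 2) := Real.sin_nonneg_of_nonneg_of_le_pi (by linarith [hα.1]) (by linarith [hα.2])
    beta_reduce
    rw [Real.norm_of_nonneg (by positivity)]
    have k1 : 0 ≤ (α / Real.pi) ^ (-(1/2) : ℝ) := Real.rpow_nonneg (div_nonneg hα.1.le hpi.le) _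
    have k2 : 0 ≤ ((2 * Real.pi - α) / Real.pi) ^ (-(1/2) : ℝ) :=
      Real.rpow_nonneg (div_nonneg (by linarith [hα.2]) hpi.le) _
    rcases eq_or_lt_of_le hα.2 with h | h
    · have : Real.sin (α / 2) = 0 := by rw [h]; simp
      rw [this, Real.zero_rpow (by norm_num)]
      exact add_nonneg k1 k2
    rcases le_total α Real.pi with h' | h'
    · have hj : α / Real.pi ≤ Real.sin (α / 2) := by
        have := Real.mul_le_sin (x := α / 2) (by linarith [hα.1]) (by linarith)
        convert this using 1; field_simp
      have := Real.rpow_le_rpow_of_nonpos (div_pos hα.1 hpi) hj (by norm_num : (-(1/2):ℝ) ≤ 0)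
      linarith
    · have hj : (2 * Real.pi - α) / Real.pi ≤ Real.sin (α / 2) := by
        have := Real.mul_le_sin (x := Real.pi - α / 2) (by linarith [hα.2]) (by linarith)
        rw [Real.sin_pi_sub] at this
        convert this using 1; field_simp
      have := Real.rpow_le_rpow_of_nonpos (div_pos (by linarith) hpi) hj (by norm_num : (-(1/2):ℝ) ≤ 0)
      linarith

def ww (r α : ℝ) : ℂ := 1 - r * Complex.exp (α * Complex.I)

lemma ww_re (r α : ℝ) : (ww r α).re = 1 - r * Real.cos α := by
  simp [ww, Complex.exp_ofReal_mul_I_re]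

lemma ww_im (r α : ℝ) : (ww r α).im = - (r * Real.sin α) := by
  simp [ww, Complex.exp_ofReal_mul_I_im]

lemma ww_norm_sq (r α : ℝ) : ‖ww r α‖ ^ 2 = (1 - r) ^ 2 + 4 * r * Real.sin (α / 2) ^ 2 := by
  rw [Complex.sq_norm, Complex.normSq_apply, ww_re, ww_im]
  have h1 : Real.cos α = 1 - 2 * Real.sin (α / 2) ^ 2 := by
    have := Real.cos_two_mul (α / 2)
    rw [show 2 * (α / 2) = α by ring, Real.cos_sq'] at this
    linarith
  have h2 : Real.sin α ^ 2 = 1 - Real.cos α ^ 2 := Real.sin_sq α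
  rw [show - (r * Real.sin α) * - (r * Real.sin α) = r ^ 2 * Real.sin α ^ 2 by ring, h2, h1]
  ring

lemma ww_lb {r α : ℝ} (h0 : 0 ≤ r) (h1 : r ≤ 1) (h2 : 0 ≤ Real.sin (α / 2)) :
    Real.sin (α / 2) ≤ ‖ww r α‖ := by
  apply le_of_sq_le_sq _ (norm_nonneg _)
  rw [ww_norm_sq]
  have h3 : Real.sin (α / 2) ≤ 1 := Real.sin_le_one _
  have h4 : Real.sin (α / 2) ^ 2 ≤ 1 := by nlinarith
  nlinarith [mul_nonneg h0 (sub_nonneg.2 h4), sq_nonneg (Real.sin (α / 2)), mul_nonneg h0 (sq_nonneg (Real.sin (α / 2))), mul_nonneg h0 h0,mul_nonneg (sub_nonneg.2 h1) (sub_nonneg.2 h1), mul_nonneg (sub_nonneg.2 h4) (mul_nonneg (sub_nonneg.2 h1) (sub_nonneg.2 h1)), mul_nonneg (sq_nonneg (Real.sin (α / 2))) (mul_nonneg h0 (sub_nonneg.2 h1))]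

lemma ww_ub {r α : ℝ} (h0 : 0 ≤ r) (h1 : r ≤ 1) : ‖ww r α‖ ≤ 2 := by
  unfold ww
  refine (norm_sub_le _ _).trans ?_
  rw [norm_mul, Complex.norm_exp_ofReal_mul_I, Complex.norm_real, Real.norm_of_nonneg h0]
  simp; linarith

lemma log_bd {x s : ℝ} (hs : 0 < s) (hs1 : s ≤ 1) (h : s ≤ x) (h2 : x ≤ 2) :
    |Real.log x| ≤ 7 * s ^ (-(1/6) : ℝ) := by
  have h1 : 1 ≤ s ^ (-(1/6) : ℝ) := Real.one_le_rpow_of_pos_of_le_one_of_nonpos hs hs1 (by norm_num)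
  have h3 : -Real.log s ≤ 6 * s ^ (-(1/6) : ℝ) := by
    have := Real.log_le_rpow_div (x := s⁻¹) (ε := 1/6) (by positivity) (by norm_num)
    rw [Real.log_inv, Real.inv_rpow hs.le, ← Real.rpow_neg hs.le] at this
    linarith
  have h4 := Real.log_le_log hs h
  have h5 := Real.log_le_log (hs.trans_le h) h2
  have := Real.log_two_lt_d9
  rw [abs_le]; constructor <;> linarith

lemma sin_pos' {α : ℝ} (h : α ∈ Set.Ioo 0 (2 * Real.pi)) : 0 < Real.sin (α / 2) :=
  Real.sin_pos_of_pos_of_lt_pi (by linarith [h.1]) (by linarith [h.2])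

lemma clog_bd {r α : ℝ} (h0 : 0 ≤ r) (h1 : r ≤ 1) (h : α ∈ Set.Ioo 0 (2 * Real.pi)) :
    ‖Complex.log (ww r α)‖ ≤ 11 * Real.sin (α / 2) ^ (-(1/6) : ℝ) := by
  have hs := sin_pos' h
  have h2 := log_bd hs (Real.sin_le_one _) (ww_lb h0 h1 hs.le) (ww_ub h0 h1)
  have h3 : 1 ≤ Real.sin (α / 2) ^ (-(1/6) : ℝ) := Real.one_le_rpow_of_pos_of_le_one_of_nonpos hs (Real.sin_le_one _) (by norm_num)
  refine (Complex.norm_le_abs_re_add_abs_im _).trans ?_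
  rw [Complex.log_re, Complex.log_im]
  have := Complex.abs_arg_le_pi (ww r α)
  have := Real.pi_lt_four
  linarith

lemma pow_bd {s : ℝ} (hs : 0 < s) (hs1 : s ≤ 1) {n : ℕ} (hn : n ≤ 3) :
    (11 * s ^ (-(1/6) : ℝ)) ^ n ≤ 11 ^ 3 * s ^ (-(1/2) : ℝ) := by
  have h1 : 1 ≤ s ^ (-(1/6) : ℝ) := Real.one_le_rpow_of_pos_of_le_one_of_nonpos hs hs1 (by norm_num)
  have := pow_le_pow_right₀ (show 1 ≤ 11 * s ^ (-(1/6) : ℝ) by linarith) hn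
  refine this.trans (le_of_eq ?_)
  rw [mul_pow, ← Real.rpow_natCast (s ^ (-(1/6) : ℝ)), ← Real.rpow_mul hs.le]
  norm_num

lemma ww_slit {r : ℝ} (h0 : 0 ≤ r) (h1 : r < 1) (α : ℝ) : ww r α ∈ Complex.slitPlane := by
  left
  rw [ww_re]
  nlinarith [Real.cos_le_one α]

lemma ww_one {α : ℝ} (h : α ∈ Set.Ioo 0 (2 * Real.pi)) : ww 1 α ∈ Complex.slitPlane ∧
    Complex.log (ww 1 α) = (Real.log (2 * Real.sin (α / 2)) : ℝ) + ((α - Real.pi) / 2 : ℝ) * Complex.I := by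
  have hs := sin_pos' h
  have e : ww 1 α = ((2 * Real.sin (α / 2) : ℝ) : ℂ) * Complex.exp (((α - Real.pi) / 2 : ℝ) * Complex.I) := by
    have a1 : Real.cos ((α - Real.pi) / 2) = Real.sin (α / 2) := by
      rw [show (α - Real.pi) / 2 = α / 2 - Real.pi / 2 by ring, Real.cos_sub_pi_div_two]
    have a2 : Real.sin ((α - Real.pi) / 2) = - Real.cos (α / 2) := by
      rw [show (α - Real.pi) / 2 = α / 2 - Real.pi / 2 by ring, Real.sin_sub_pi_div_two]
    have b1 : Real.cos α = 1 - 2 * Real.sin (α / 2) ^ 2 := by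
      have := Real.cos_two_mul (α / 2)
      rw [show 2 * (α / 2) = α by ring, Real.cos_sq'] at this
      linarith
    have b2 : Real.sin α = 2 * Real.sin (α / 2) * Real.cos (α / 2) := by
      have := Real.sin_two_mul (α / 2)
      rwa [show 2 * (α / 2) = α by ring] at this
    apply Complex.ext
    · rw [ww_re, Complex.re_ofReal_mul, Complex.exp_ofReal_mul_I_re, a1, b1]; ring
    · rw [ww_im, Complex.im_ofReal_mul, Complex.exp_ofReal_mul_I_im, a2, b2]; ring
  constructor
  · left
    rw [e, Complex.re_ofReal_mul, Complex.exp_ofReal_mul_I_re]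
    have : 0 < Real.cos ((α - Real.pi) / 2) := Real.cos_pos_of_mem_Ioo ⟨by linarith [h.1], by linarith [h.2]⟩
    positivity
  · rw [e, Complex.log_ofReal_mul (by positivity) (Complex.exp_ne_zero _), Complex.log_exp]
    · simp; linarith [h.1, Real.pi_pos]
    · simp; linarith [h.2, Real.pi_pos]

lemma ww_cont : Continuous (fun p : ℝ × ℝ => ww p.1 p.2) := by
  unfold ww; fun_prop

lemma cont_log_ww {r : ℝ} (h0 : 0 ≤ r) (h1 : r < 1) : Continuous (fun α => Complex.log (ww r α)) := by
  refine Continuous.clog ?_ (fun α => ww_slit h0 h1 α)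
  unfold ww; fun_prop

def ell (α : ℝ) : ℝ := Real.log (2 * Real.sin (α / 2))

lemma ae_Ioo : ∀ᵐ α : ℝ, α ∈ Set.uIoc 0 (2 * Real.pi) → α ∈ Set.Ioo 0 (2 * Real.pi) := by
  have : ∀ᵐ α : ℝ, α ≠ 2 * Real.pi := by
    simp [ae_iff]
  filter_upwards [this] with α h1 h2
  rw [Set.uIoc_of_le (by positivity)] at h2
  exact ⟨h2.1, lt_of_le_of_ne h2.2 h1⟩

lemma lim_D {n : ℕ} (hn : n ≤ 3) {c : ℝ → ℂ} (hc : Continuous c) :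
    Tendsto (fun r : ℝ => ∫ α in (0:ℝ)..(2 * Real.pi), c α * Complex.log (ww r α) ^ n) (𝓝[<] 1)
      (𝓝 (∫ α in (0:ℝ)..(2 * Real.pi), c α * ((ell α : ℝ) + ((α - Real.pi) / 2 : ℝ) * Complex.I) ^ n)) := by
  obtain ⟨M, hM⟩ := (isCompact_Icc (a := (0:ℝ)) (b := 2 * Real.pi)).exists_bound_of_continuousOn hc.continuousOn
  have hev : ∀ᶠ r : ℝ in 𝓝[<] 1, 0 ≤ r ∧ r < 1 := by
    filter_upwards [self_mem_nhdsWithin, mem_nhdsWithin_of_mem_nhds (Ioi_mem_nhds (show (0:ℝ) < 1 by norm_num))] with r h1 h2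
    exact ⟨le_of_lt h2, h1⟩
  refine intervalIntegral.tendsto_integral_filter_of_dominated_convergence
    (fun α => M * (11 ^ 3 * Real.sin (α / 2) ^ (-(1/2) : ℝ))) ?_ ?_ ?_ ?_
  · filter_upwards [hev] with r hr
    have := cont_log_ww hr.1 hr.2
    exact (by fun_prop : Continuous fun α => c α * Complex.log (ww r α) ^ n).aestronglyMeasurable
  · filter_upwards [hev] with r hr
    filter_upwards [ae_Ioo] with α h hα
    have h := h hα
    rw [norm_mul, norm_pow]
    have hb := hM α ⟨h.1.le, h.2.le⟩
    have hs := sin_pos' h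
    refine mul_le_mul hb ?_ (by positivity) ((norm_nonneg _).trans hb)
    exact (pow_le_pow_left₀ (norm_nonneg _) (clog_bd hr.1 hr.2.le h) n).trans (pow_bd hs (Real.sin_le_one _) hn)
  · exact (intg_s.const_mul _).const_mul _
  · filter_upwards [ae_Ioo] with α h hα
    have h := h hα
    obtain ⟨w1, w2⟩ := ww_one h
    unfold ell
    rw [← w2]
    have : ContinuousAt (fun r : ℝ => c α * Complex.log (ww r α) ^ n) 1 := by
      have h1 : ContinuousAt (fun r : ℝ => ww r α) 1 := by unfold ww; fun_prop
      have := h1.clog w1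
      fun_prop
    exact this.tendsto.mono_left nhdsWithin_le_nhds

lemma intg_ell {n : ℕ} (hn : n ≤ 3) {c : ℝ → ℝ} (hc : Continuous c) :
    IntervalIntegrable (fun α => c α * ell α ^ n) volume 0 (2 * Real.pi) := by
  obtain ⟨M, hM⟩ := (isCompact_Icc (a := (0:ℝ)) (b := 2 * Real.pi)).exists_bound_of_continuousOn hc.continuousOn
  refine ((intg_s.const_mul (11 ^ 3)).const_mul M).mono_fun' ?_ ?_
  · refine Measurable.aestronglyMeasurable ?_
    unfold ell
    have := hc.measurable
    fun_prop
  · refine (ae_restrict_iff' measurableSet_uIoc).2 ?_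
    filter_upwards [ae_Ioo] with α h hα
    have h := h hα
    rw [norm_mul, norm_pow]
    have hb := hM α ⟨h.1.le, h.2.le⟩
    have hs := sin_pos' h
    refine mul_le_mul hb ?_ (by positivity) ((norm_nonneg _).trans hb)
    have : ‖ell α‖ ≤ 11 * Real.sin (α / 2) ^ (-(1/6) : ℝ) := by
      have := log_bd hs (Real.sin_le_one _) (show Real.sin (α/2) ≤ 2 * Real.sin (α / 2) by linarith) (by linarith [Real.sin_le_one (α/2)])
      have h3 : 0 ≤ Real.sin (α / 2) ^ (-(1/6) : ℝ) := by positivity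
      rw [Real.norm_eq_abs]; unfold ell; linarith
    exact (pow_le_pow_left₀ (norm_nonneg _) this n).trans (pow_bd hs (Real.sin_le_one _) hn)

lemma mean0 {r : ℝ} (h0 : 0 ≤ r) (h1 : r < 1) {n : ℕ} (hn : n ≠ 0) :
    ∫ α in (0:ℝ)..(2 * Real.pi), Complex.log (ww r α) ^ n = 0 := by
  have hd : DiffContOnCl ℂ (fun z : ℂ => Complex.log (1 - z) ^ n) (Metric.ball 0 |r|) := by
    apply DifferentiableOn.diffContOnCl
    intro z hz
    have hz := Metric.closure_ball_subset_closedBall hz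
    rw [mem_closedBall_zero_iff, abs_of_nonneg h0] at hz
    have : 1 - z ∈ Complex.slitPlane := by
      left
      have := Complex.re_le_norm z
      simp; linarith
    exact (((differentiableAt_id.const_sub 1).clog this).pow n).differentiableWithinAt
  have := hd.circleAverage
  rw [Real.circleAverage_def] at this
  simp [hn] at this
  simpa [circleMap, ww] using this

lemma re_int {R S : ℝ → ℝ} {a b : ℝ} (hR : IntervalIntegrable R volume a b) (hS : IntervalIntegrable S volume a b) :
    (∫ α in a..b, ((R α : ℂ) + (S α : ℂ) * Complex.I)).re = ∫ α in a..b, R α := by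
  rw [intervalIntegral.integral_add, intervalIntegral.integral_mul_const, intervalIntegral.integral_ofReal,
    intervalIntegral.integral_ofReal]
  · simp
  · exact ⟨hR.1.ofReal, hR.2.ofReal⟩
  · exact IntervalIntegrable.mul_const ⟨hS.1.ofReal, hS.2.ofReal⟩ _

lemma mom_C {n : ℕ} (hn : n ≤ 3) (hn0 : n ≠ 0) :
    ∫ α in (0:ℝ)..(2 * Real.pi), ((ell α : ℝ) + ((α - Real.pi) / 2 : ℝ) * Complex.I) ^ n = 0 := by
  have h := lim_D hn (c := fun _ => 1) continuous_const
  simp only [one_mul] at h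
  refine tendsto_nhds_unique h ?_
  refine tendsto_const_nhds.congr' ?_
  filter_upwards [self_mem_nhdsWithin, mem_nhdsWithin_of_mem_nhds (Ioi_mem_nhds (show (0:ℝ) < 1 by norm_num))] with r h1 h2
  exact (mean0 (le_of_lt h2) h1 hn0).symm

lemma mom1 : ∫ α in (0:ℝ)..(2 * Real.pi), ell α = 0 := by
  have h := mom_C (n := 1) (by norm_num) (by norm_num)
  have i1 := intg_ell (n := 1) (by norm_num) (c := fun _ => 1) continuous_const
  simp only [one_mul, pow_one] at i1 h
  have := re_int i1 ((by fun_prop : Continuous fun α : ℝ => (α - Real.pi) / 2).intervalIntegrable _ _)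
  rw [← this, h]; simp

lemma mom2 : ∫ α in (0:ℝ)..(2 * Real.pi), ell α ^ 2 = Real.pi ^ 3 / 6 := by
  have h := mom_C (n := 2) (by norm_num) (by norm_num)
  have i2 := intg_ell (n := 2) (by norm_num) (c := fun _ => 1) continuous_const
  simp only [one_mul] at i2
  have i1 := intg_ell (n := 1) (by norm_num) (c := fun α => α - Real.pi) (by fun_prop)
  have ip := ((by fun_prop : Continuous fun α : ℝ => ((α - Real.pi) / 2) ^ 2).intervalIntegrable (μ := volume) 0 (2 * Real.pi))
  have := re_int (i2.sub ip) i1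
  rw [intervalIntegral.integral_sub i2 ip] at this
  have e : ∫ α in (0:ℝ)..(2 * Real.pi), ((α - Real.pi) / 2) ^ 2 = Real.pi ^ 3 / 6 := by
    have hd : ∀ x ∈ Set.uIcc 0 (2 * Real.pi), HasDerivAt (fun x : ℝ => (x - Real.pi) ^ 3 / 12) (((x - Real.pi) / 2) ^ 2) x := by
      intro x _
      refine ((((hasDerivAt_id x).sub_const Real.pi).pow 3).div_const 12).congr_deriv ?_
      simp; ring
    rw [intervalIntegral.integral_eq_sub_of_hasDerivAt hd ip]
    ring
  rw [e] at this
  have h' : (0:ℂ).re = (∫ α in (0:ℝ)..(2 * Real.pi), ell α ^ 2) - Real.pi ^ 3 / 6 := by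
    rw [← this, ← h]
    congr 2; ext α
    push_cast
    linear_combination (((α:ℂ) - Real.pi) / 2) ^ 2 * Complex.I_sq
  simp at h'
  linarith

lemma mom3 : ∫ α in (0:ℝ)..(2 * Real.pi), ell α ^ 3 =
    3 / 4 * ∫ α in (0:ℝ)..(2 * Real.pi), (α - Real.pi) ^ 2 * ell α := by
  have h := mom_C (n := 3) (by norm_num) (by norm_num)
  have i3 := intg_ell (n := 3) (by norm_num) (c := fun _ => 1) continuous_const
  simp only [one_mul] at i3
  have i1 := intg_ell (n := 1) (by norm_num) (c := fun α => (α - Real.pi) ^ 2) (by fun_prop)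
  have i2 := intg_ell (n := 2) (by norm_num) (c := fun α => 3 * (α - Real.pi) / 2) (by fun_prop)
  simp only [pow_one] at i1
  have ip := ((by fun_prop : Continuous fun α : ℝ => ((α - Real.pi) / 2) ^ 3).intervalIntegrable (μ := volume) 0 (2 * Real.pi))
  have := re_int (i3.sub (i1.const_mul (3/4))) (i2.sub ip)
  rw [intervalIntegral.integral_sub i3 (i1.const_mul _), intervalIntegral.integral_const_mul] at this
  have h' : (0:ℂ).re = (∫ α in (0:ℝ)..(2 * Real.pi), ell α ^ 3) - 3 / 4 * ∫ α in (0:ℝ)..(2 * Real.pi), (α - Real.pi) ^ 2 * ell α := by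
    rw [← this, ← h]
    congr 2; ext α
    push_cast
    linear_combination (3 * (ell α : ℂ) * (((α:ℂ) - Real.pi) / 2) ^ 2 + (((α:ℂ) - Real.pi) / 2) ^ 3 * Complex.I) * Complex.I_sq
  simp at h'
  linarith

lemma fourier_int {k : ℕ} (hk : k ≠ 0) :
    ∫ α in (0:ℝ)..(2 * Real.pi), ((α - Real.pi : ℝ) : ℂ) ^ 2 * Complex.exp (α * Complex.I) ^ k = 4 * Real.pi / k ^ 2 := by
  have hkI : (k : ℂ) * Complex.I ≠ 0 := mul_ne_zero (by exact_mod_cast hk) Complex.I_ne_zero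
  have hd : ∀ x ∈ Set.uIcc 0 (2 * Real.pi), HasDerivAt (fun x : ℝ =>
      (((x - Real.pi : ℝ) : ℂ) ^ 2 / (k * Complex.I) - 2 * ((x - Real.pi : ℝ) : ℂ) / (k * Complex.I) ^ 2 + 2 / (k * Complex.I) ^ 3)
        * Complex.exp ((k * Complex.I) * x)) (((x - Real.pi : ℝ) : ℂ) ^ 2 * Complex.exp (x * Complex.I) ^ k) x := by
    intro x _
    have h1 : HasDerivAt (fun x : ℝ => ((x - Real.pi : ℝ) : ℂ)) 1 x := by
      have := ((hasDerivAt_id x).sub_const Real.pi).ofReal_comp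
      simpa using this
    have h2 : HasDerivAt (fun x : ℝ => Complex.exp ((k * Complex.I) * x)) (Complex.exp ((k * Complex.I) * x) * ((k * Complex.I) * 1)) x := by
      have h3 : HasDerivAt (fun x : ℝ => (x : ℂ)) 1 x := by
        simpa using (hasDerivAt_id x).ofReal_comp
      exact (h3.const_mul _).cexp
    have := ((((h1.pow 2).div_const (k * Complex.I)).sub ((h1.const_mul 2).div_const ((k * Complex.I) ^ 2))).add_const (2 / ((k:ℂ) * Complex.I) ^ 3)).mul h2
    refine this.congr_deriv ?_
    rw [← Complex.exp_nat_mul, show (k:ℂ) * (x * Complex.I) = (k * Complex.I) * x by ring]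
    simp only [Pi.pow_apply, Pi.sub_apply]
    generalize (k : ℂ) * Complex.I = m at hkI
    field_simp
    push_cast
    ring
  rw [intervalIntegral.integral_eq_sub_of_hasDerivAt hd]
  · have e : Complex.exp ((k * Complex.I) * ((2 * Real.pi : ℝ) : ℂ)) = 1 := by
      rw [Complex.exp_eq_one_iff]
      exact ⟨k, by push_cast; ring⟩
    rw [e]
    have hk' : (k:ℂ) ≠ 0 := by exact_mod_cast hk
    simp only [Complex.ofReal_zero, mul_zero, Complex.exp_zero, mul_pow, Complex.I_sq]
    push_cast
    field_simp
    ring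
  · exact (by fun_prop : Continuous fun α : ℝ => ((α - Real.pi : ℝ) : ℂ) ^ 2 * Complex.exp (α * Complex.I) ^ k).intervalIntegrable _ _

lemma fourier_sum {r : ℝ} (h0 : 0 ≤ r) (h1 : r < 1) :
    ∫ α in (0:ℝ)..(2 * Real.pi), ((α - Real.pi : ℝ) : ℂ) ^ 2 * Complex.log (ww r α) =
      - ∑' k : ℕ, (r : ℂ) ^ k * (4 * Real.pi * (1 / k ^ 3)) := by
  have hs : HasSum (fun k : ℕ => ∫ α in (0:ℝ)..(2 * Real.pi), ((α - Real.pi : ℝ) : ℂ) ^ 2 * ((r * Complex.exp (α * Complex.I)) ^ k / k))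
      (∫ α in (0:ℝ)..(2 * Real.pi), ((α - Real.pi : ℝ) : ℂ) ^ 2 * (- Complex.log (1 - r * Complex.exp (α * Complex.I)))) := by
    refine intervalIntegral.hasSum_integral_of_dominated_convergence (fun k _ => Real.pi ^ 2 * r ^ k) ?_ ?_ ?_ ?_ ?_
    · intro k
      exact (by fun_prop : Continuous fun α : ℝ => ((α - Real.pi : ℝ) : ℂ) ^ 2 * ((r * Complex.exp (α * Complex.I)) ^ k / k)).aestronglyMeasurable
    · intro k
      refine Eventually.of_forall fun α hα => ?_
      rw [Set.uIoc_of_le (by positivity)] at hα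
      rw [norm_mul, norm_pow, norm_div, norm_pow, norm_mul, Complex.norm_exp_ofReal_mul_I, Complex.norm_real, Complex.norm_real, Complex.norm_natCast, Real.norm_of_nonneg h0, mul_one]
      have a1 : ‖α - Real.pi‖ ≤ Real.pi := by
        rw [Real.norm_eq_abs, abs_le]; constructor <;> linarith [hα.1, hα.2]
      have a2 : r ^ k / k ≤ r ^ k := by
        rcases Nat.eq_zero_or_pos k with h | h
        · subst h; simp
        · exact div_le_self (by positivity) (by exact_mod_cast h)
      exact mul_le_mul (pow_le_pow_left₀ (norm_nonneg _) a1 2) a2 (by positivity) (by positivity)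
    · exact Eventually.of_forall fun _ _ => (summable_geometric_of_lt_one h0 h1).mul_left _
    · exact intervalIntegrable_const
    · refine Eventually.of_forall fun α _ => ?_
      refine HasSum.mul_left _ (Complex.hasSum_taylorSeries_neg_log ?_)
      rw [norm_mul, Complex.norm_exp_ofReal_mul_I, Complex.norm_real, Real.norm_of_nonneg h0, mul_one]
      exact h1
  have e := hs.tsum_eq
  simp only [mul_neg, intervalIntegral.integral_neg] at e
  change _ = - ∫ α in (0:ℝ)..(2 * Real.pi), ((α - Real.pi : ℝ) : ℂ) ^ 2 * Complex.log (ww r α) at e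
  rw [eq_neg_iff_add_eq_zero, add_comm, ← eq_neg_iff_add_eq_zero, ← e]
  congr 1; ext k
  rcases Nat.eq_zero_or_pos k with h | h
  · subst h; simp
  · have := fourier_int h.ne'
    have hk : (k:ℂ) ≠ 0 := by exact_mod_cast h.ne'
    rw [show (r : ℂ) ^ k * (4 * Real.pi * (1 / k ^ 3)) = (r ^ k / k) * (4 * Real.pi / k ^ 2) by field_simp, ← this,
      ← intervalIntegral.integral_const_mul]
    congr 1; ext α
    rw [mul_pow]; ring

def zeta3 : ℝ := ∑' k : ℕ, 1 / (k : ℝ) ^ 3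

lemma zeta3_eq : riemannZeta 3 = (zeta3 : ℂ) := by
  have := zeta_nat_eq_tsum_of_gt_one (k := 3) (by norm_num)
  push_cast at this
  rw [this, zeta3]; push_cast; rfl

lemma four_mom : ∫ α in (0:ℝ)..(2 * Real.pi), (α - Real.pi) ^ 2 * ell α = - (4 * Real.pi * zeta3) := by
  have h := lim_D (n := 1) (by norm_num) (c := fun α => ((α - Real.pi : ℝ) : ℂ) ^ 2) (by fun_prop)
  simp only [pow_one] at h
  have hl : Tendsto (fun r : ℝ => - ∑' k : ℕ, (r : ℂ) ^ k * (4 * Real.pi * (1 / k ^ 3))) (𝓝[<] 1)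
      (𝓝 (- ∑' k : ℕ, (4 * Real.pi * (1 / (k:ℂ) ^ 3)))) := by
    refine Tendsto.neg ?_
    refine tendsto_tsum_of_dominated_convergence (bound := fun k : ℕ => 4 * Real.pi * (1 / (k:ℝ) ^ 3)) ?_ ?_ ?_
    · exact (Real.summable_one_div_nat_pow.2 (by norm_num)).mul_left _
    · intro k
      have : ContinuousAt (fun r : ℝ => (r : ℂ) ^ k * (4 * Real.pi * (1 / (k:ℂ) ^ 3))) 1 := by fun_prop
      have := this.tendsto
      simp only [Complex.ofReal_one, one_pow, one_mul] at this
      exact this.mono_left nhdsWithin_le_nhds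
    · filter_upwards [self_mem_nhdsWithin, mem_nhdsWithin_of_mem_nhds (Ioi_mem_nhds (show (0:ℝ) < 1 by norm_num))] with r h1 h2 k
      have h1 : r < 1 := h1
      have h2 : 0 < r := h2
      have : (r : ℂ) ^ k * (4 * Real.pi * (1 / (k:ℂ) ^ 3)) = ((r ^ k * (4 * Real.pi * (1 / (k:ℝ) ^ 3)) : ℝ) : ℂ) := by
        push_cast; rfl
      rw [this, Complex.norm_real, Real.norm_of_nonneg (by positivity)]
      exact mul_le_of_le_one_left (by positivity) (pow_le_one₀ h2.le h1.le)
  have hu := tendsto_nhds_unique h (hl.congr' (by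
    filter_upwards [self_mem_nhdsWithin, mem_nhdsWithin_of_mem_nhds (Ioi_mem_nhds (show (0:ℝ) < 1 by norm_num))] with r h1 h2
    exact (fourier_sum (le_of_lt h2) h1).symm))
  have i1 := intg_ell (n := 1) (by norm_num) (c := fun α => (α - Real.pi) ^ 2) (by fun_prop)
  simp only [pow_one] at i1
  have := re_int i1 ((by fun_prop : Continuous fun α : ℝ => (α - Real.pi) ^ 2 * ((α - Real.pi) / 2)).intervalIntegrable _ _)
  rw [← this]
  have e : - ∑' k : ℕ, (4 * Real.pi * (1 / (k:ℂ) ^ 3)) = ((- (4 * Real.pi * zeta3) : ℝ) : ℂ) := by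
    rw [tsum_mul_left, zeta3]; push_cast; rfl
  rw [e] at hu
  rw [← Complex.ofReal_re (-(4 * Real.pi * zeta3)), ← hu]
  congr 2; ext α
  push_cast; ring

lemma mom3' : ∫ α in (0:ℝ)..(2 * Real.pi), ell α ^ 3 = -(3 * Real.pi * zeta3) := by
  rw [mom3, four_mom]; ring

def LL (φ : ℝ) : ℝ := Real.log (Real.sin φ)

lemma half_sin (G : ℝ → ℝ) (hG : IntervalIntegrable (fun α => G (Real.sin (α / 2))) volume 0 (2 * Real.pi)) :
    IntervalIntegrable (fun φ => G (Real.sin φ)) volume 0 (Real.pi / 2) ∧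
    ∫ α in (0:ℝ)..(2 * Real.pi), G (Real.sin (α / 2)) = 4 * ∫ φ in (0:ℝ)..(Real.pi / 2), G (Real.sin φ) := by
  have hpi := Real.pi_pos
  have h1 : IntervalIntegrable (fun φ => G (Real.sin φ)) volume 0 Real.pi := by
    have := hG.comp_mul_right (c := 2) (by norm_num)
    simpa using this
  have ha : IntervalIntegrable (fun φ => G (Real.sin φ)) volume 0 (Real.pi / 2) :=
    h1.mono_set (by rw [Set.uIcc_of_le hpi.le, Set.uIcc_of_le (by positivity)]; exact Set.Icc_subset_Icc le_rfl (by linarith))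
  have hb : IntervalIntegrable (fun φ => G (Real.sin φ)) volume (Real.pi / 2) Real.pi :=
    h1.mono_set (by rw [Set.uIcc_of_le hpi.le, Set.uIcc_of_le (by linarith)]; exact Set.Icc_subset_Icc (by positivity) le_rfl)
  refine ⟨ha, ?_⟩
  have e1 := intervalIntegral.integral_comp_div (a := 0) (b := 2 * Real.pi) (fun φ => G (Real.sin φ)) (c := 2) (by norm_num)
  rw [e1, show 2 * Real.pi / 2 = Real.pi by ring, zero_div, ← intervalIntegral.integral_add_adjacent_intervals ha hb]
  have e2 := intervalIntegral.integral_comp_sub_left (a := 0) (b := Real.pi / 2) (fun φ => G (Real.sin φ)) Real.pi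
  simp only [Real.sin_pi_sub, sub_zero] at e2
  rw [show Real.pi - Real.pi / 2 = Real.pi / 2 by ring] at e2
  rw [← e2]
  simp; ring

lemma LL_final : IntervalIntegrable (fun φ => LL φ ^ 3 - 3 * Real.pi ^ 2 / 4 * LL φ) volume 0 (Real.pi / 2) ∧
   ∫ φ in (0:ℝ)..(Real.pi / 2), (LL φ ^ 3 - 3 * Real.pi ^ 2 / 4 * LL φ) =
    Real.pi ^ 3 / 4 * Real.log 2 - Real.pi / 2 * Real.log 2 ^ 3 - 3 * Real.pi / 4 * zeta3 := by
  set a := Real.log 2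
  have i3 := intg_ell (n := 3) (by norm_num) (c := fun _ => 1) continuous_const
  have i2 := intg_ell (n := 2) (by norm_num) (c := fun _ => 1) continuous_const
  have i1 := intg_ell (n := 1) (by norm_num) (c := fun _ => 1) continuous_const
  simp only [one_mul, pow_one] at i1 i2 i3
  have ic : IntervalIntegrable (fun _ : ℝ => - a ^ 3 + 3 * Real.pi ^ 2 / 4 * a) volume 0 (2 * Real.pi) := intervalIntegrable_const
  have iall := ((i3.sub (i2.const_mul (3 * a))).add (i1.const_mul (3 * a ^ 2 - 3 * Real.pi ^ 2 / 4))).add ic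
  have hcong : ∀ᵐ α : ℝ, α ∈ Set.uIoc 0 (2 * Real.pi) →
      ell α ^ 3 - 3 * a * ell α ^ 2 + (3 * a ^ 2 - 3 * Real.pi ^ 2 / 4) * ell α + (- a ^ 3 + 3 * Real.pi ^ 2 / 4 * a)
       = (Real.log (Real.sin (α / 2))) ^ 3 - 3 * Real.pi ^ 2 / 4 * Real.log (Real.sin (α / 2)) := by
    filter_upwards [ae_Ioo] with α h hα
    have hs := sin_pos' (h hα)
    have : ell α = a + Real.log (Real.sin (α / 2)) := by
      rw [ell, Real.log_mul (by norm_num) hs.ne']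
    rw [this]; ring
  have hint : IntervalIntegrable (fun α => (Real.log (Real.sin (α / 2))) ^ 3 - 3 * Real.pi ^ 2 / 4 * Real.log (Real.sin (α / 2))) volume 0 (2 * Real.pi) :=
    iall.congr_ae ((ae_restrict_iff' measurableSet_uIoc).2 hcong)
  obtain ⟨r1, r2⟩ := half_sin (fun s => Real.log s ^ 3 - 3 * Real.pi ^ 2 / 4 * Real.log s) hint
  refine ⟨r1, ?_⟩
  have hval := intervalIntegral.integral_congr_ae hcong
  rw [intervalIntegral.integral_add ((i3.sub (i2.const_mul (3 * a))).add (i1.const_mul (3 * a ^ 2 - 3 * Real.pi ^ 2 / 4))) ic,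
    intervalIntegral.integral_add (i3.sub (i2.const_mul (3 * a))) (i1.const_mul (3 * a ^ 2 - 3 * Real.pi ^ 2 / 4)),
    intervalIntegral.integral_sub i3 (i2.const_mul (3 * a)), intervalIntegral.integral_const_mul,
    intervalIntegral.integral_const_mul, mom1, mom2, mom3', intervalIntegral.integral_const, r2] at hval
  simp only [LL]
  simp only [smul_eq_mul] at hval
  linarith

def hh (ζ : ℂ) : ℂ := ζ ^ 3 * Complex.exp ζ * Complex.exp (-(1/2) * Complex.log (1 + Complex.exp (2 * ζ)))

lemma ww_exp (x y : ℝ) : 1 + Complex.exp (2 * (x + y * Complex.I)) = ww (Real.exp (2 * x)) (2 * y + Real.pi) := by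
  unfold ww
  push_cast
  rw [add_mul, Complex.exp_add (2 * (y:ℂ) * Complex.I), Complex.exp_pi_mul_I, mul_add, Complex.exp_add]
  ring_nf

lemma hh_eq (x y : ℝ) : hh (x + y * Complex.I) = (x + y * Complex.I) ^ 3 * Complex.exp (x + y * Complex.I) *
    Complex.exp (-(1/2) * Complex.log (ww (Real.exp (2 * x)) (2 * y + Real.pi))) := by
  rw [hh, ww_exp]

lemma hh_slit {ζ : ℂ} (h : ζ.re < 0) : 1 + Complex.exp (2 * ζ) ∈ Complex.slitPlane := by
  have e : ζ = ζ.re + ζ.im * Complex.I := (Complex.re_add_im ζ).symm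
  rw [e, ww_exp]
  exact ww_slit (Real.exp_pos _).le (by rw [Real.exp_lt_one_iff]; linarith) _

lemma hh_diff {ζ : ℂ} (h : ζ.re < 0) : DifferentiableAt ℂ hh ζ := by
  have h1 : DifferentiableAt ℂ (fun ζ : ℂ => Complex.log (1 + Complex.exp (2 * ζ))) ζ :=
    DifferentiableAt.clog (by fun_prop) (hh_slit h)
  unfold hh
  fun_prop

lemma sin_half_aux (y : ℝ) : Real.sin ((2 * y + Real.pi) / 2) = Real.cos y := by
  rw [show (2 * y + Real.pi) / 2 = y + Real.pi / 2 by ring, Real.sin_add_pi_div_two]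

lemma hh_bd {x y : ℝ} (hx : x ≤ 0) (hy : y ∈ Set.Ioo 0 (Real.pi / 2)) :
    ‖hh (x + y * Complex.I)‖ ≤ ((-x + 2) ^ 3 * Real.exp x) * Real.cos y ^ (-(1/2) : ℝ) := by
  have hc : 0 < Real.cos y := Real.cos_pos_of_mem_Ioo ⟨by linarith [hy.1, Real.pi_pos], hy.2⟩
  rw [hh_eq, norm_mul, norm_mul, norm_pow, Complex.norm_exp, Complex.norm_exp]
  have h1 : ‖(x + y * Complex.I : ℂ)‖ ≤ -x + 2 := by
    refine (Complex.norm_le_abs_re_add_abs_im _).trans ?_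
    simp
    rw [abs_of_nonpos hx, abs_of_pos hy.1]
    linarith [hy.2, Real.pi_lt_four]
  have h2 : (x + y * Complex.I : ℂ).re = x := by simp
  have hlb := ww_lb (r := Real.exp (2 * x)) (α := 2 * y + Real.pi) (Real.exp_pos _).le
    (by rw [Real.exp_le_one_iff]; linarith) (by rw [sin_half_aux]; exact hc.le)
  rw [sin_half_aux] at hlb
  have h3 : (-(1/2) * Complex.log (ww (Real.exp (2 * x)) (2 * y + Real.pi))).re =
      -(1/2) * Real.log ‖ww (Real.exp (2 * x)) (2 * y + Real.pi)‖ := by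
    have : (-(1/2) : ℂ) = ((-(1/2) : ℝ) : ℂ) := by push_cast; rfl
    rw [this, Complex.re_ofReal_mul, Complex.log_re]
  rw [h2, h3, Real.rpow_def_of_pos hc]
  have h4 := Real.log_le_log hc hlb
  have h5 : 0 ≤ -x + 2 := by linarith
  refine mul_le_mul (mul_le_mul_of_nonneg_right (pow_le_pow_left₀ (norm_nonneg _) h1 3) (Real.exp_pos _).le) ?_
    (Real.exp_pos _).le (by positivity)
  rw [Real.exp_le_exp]
  linarith

lemma intg_cos : IntervalIntegrable (fun y : ℝ => Real.cos y ^ (-(1/2) : ℝ)) volume 0 (Real.pi / 2) := by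
  have h := (half_sin (fun s => s ^ (-(1/2) : ℝ)) intg_s).1
  have := (h.comp_sub_left (Real.pi / 2)).symm
  simpa [Real.sin_pi_div_two_sub] using this

lemma ae_Ioo2 : ∀ᵐ y : ℝ, y ∈ Set.uIoc 0 (Real.pi / 2) → y ∈ Set.Ioo 0 (Real.pi / 2) := by
  have : ∀ᵐ y : ℝ, y ≠ Real.pi / 2 := by
    simp [ae_iff]
  filter_upwards [this] with α h1 h2
  rw [Set.uIoc_of_le (by positivity)] at h2
  exact ⟨h2.1, lt_of_le_of_ne h2.2 h1⟩

lemma hh_bottom (x : ℝ) : (hh (x + (0:ℝ) * Complex.I)).im = 0 := by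
  have : hh (x + (0:ℝ) * Complex.I) = ((x ^ 3 * Real.exp x * Real.exp (-(1/2) * Real.log (1 + Real.exp (2 * x))) : ℝ) : ℂ) := by
    unfold hh
    push_cast [Complex.ofReal_log (show (0:ℝ) ≤ 1 + Real.exp (2 * x) by positivity)]
    simp
  rw [this, Complex.ofReal_im]

lemma exp_half_log {u : ℝ} (hu : 0 < u) : Real.exp (-(1/2) * Real.log u) = 1 / √u := by
  rw [Real.sqrt_eq_rpow, Real.rpow_def_of_pos hu, eq_div_iff (Real.exp_pos _).ne', ← Real.exp_add, Real.exp_eq_one_iff]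
  ring

lemma hh_top {x : ℝ} (hx : x < 0) : (hh (x + (Real.pi / 2 : ℝ) * Complex.I)).im =
    (x ^ 3 - 3 * Real.pi ^ 2 / 4 * x) * (Real.exp x / √(1 - Real.exp (2 * x))) := by
  have hpos : 0 < 1 - Real.exp (2 * x) := by
    have : Real.exp (2 * x) < 1 := by rw [Real.exp_lt_one_iff]; linarith
    linarith
  have e0 : Complex.exp (2 * (x + (Real.pi / 2 : ℝ) * Complex.I)) = - Complex.exp (2 * x) := by
    rw [mul_add, Complex.exp_add, show 2 * (((Real.pi / 2 : ℝ) : ℂ) * Complex.I) = Real.pi * Complex.I by push_cast; ring,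
      Complex.exp_pi_mul_I]; ring
  have e1 : Complex.exp (x + (Real.pi / 2 : ℝ) * Complex.I) = Complex.I * Complex.exp x := by
    rw [Complex.exp_add]; push_cast; rw [Complex.exp_pi_div_two_mul_I]; ring
  have : hh (x + (Real.pi / 2 : ℝ) * Complex.I) =
      (((Real.pi / 2) ^ 3 - 3 * x ^ 2 * (Real.pi / 2) : ℝ) + (x ^ 3 - 3 * Real.pi ^ 2 / 4 * x : ℝ) * Complex.I) *
      ((Real.exp x * Real.exp (-(1/2) * Real.log (1 - Real.exp (2 * x))) : ℝ) : ℂ) := by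
    unfold hh
    rw [e0, e1]
    push_cast [Complex.ofReal_log hpos.le]
    rw [← sub_eq_add_neg]
    have h4 : Complex.I ^ 4 = 1 := Complex.I_pow_four
    linear_combination (Complex.exp x * Complex.exp (-(1/2) * Complex.log (1 - Complex.exp (2 * x)))) *
      ((Real.pi / 2) ^ 3 * h4 + 3 * x * (Real.pi/2) ^ 2 * Complex.I * Complex.I_sq + 3 * x ^ 2 * (Real.pi/2) * Complex.I_sq)
  rw [this, Complex.im_mul_ofReal, exp_half_log hpos]
  simp [-Complex.ofReal_pow, -Complex.ofReal_sub, -Complex.ofReal_mul]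
  left; rfl

lemma hh_right {y : ℝ} (hy : y ∈ Set.Ioo 0 (Real.pi / 2)) :
    ContinuousAt (fun x : ℝ => (hh (x + y * Complex.I)).re) 0 ∧
    (hh ((0:ℝ) + y * Complex.I)).re = y ^ 3 * Real.sin (y / 2) / √(2 * Real.cos y) := by
  have hα : 2 * y + Real.pi ∈ Set.Ioo 0 (2 * Real.pi) := ⟨by linarith [hy.1, Real.pi_pos], by linarith [hy.2]⟩
  have hc : 0 < Real.cos y := Real.cos_pos_of_mem_Ioo ⟨by linarith [hy.1, Real.pi_pos], hy.2⟩
  obtain ⟨w1, w2⟩ := ww_one hα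
  have e : 1 + Complex.exp (2 * ((0:ℝ) + y * Complex.I)) = ww 1 (2 * y + Real.pi) := by
    rw [ww_exp]; simp
  constructor
  · have h1 : ContinuousAt (fun x : ℝ => Complex.log (1 + Complex.exp (2 * (x + y * Complex.I)))) 0 := by
      refine ContinuousAt.clog (by fun_prop) ?_
      rw [e]; exact w1
    have h2 : ContinuousAt (fun x : ℝ => hh (x + y * Complex.I)) 0 := by
      unfold hh; fun_prop
    exact Complex.continuous_re.continuousAt.comp h2
  · unfold hh
    rw [e, w2, sin_half_aux, show (2 * y + Real.pi - Real.pi) / 2 = y by ring]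
    have : ((0:ℝ) + y * Complex.I) ^ 3 * Complex.exp ((0:ℝ) + y * Complex.I) *
       Complex.exp (-(1/2) * ((Real.log (2 * Real.cos y) : ℝ) + y * Complex.I)) =
       ((y ^ 3 * Real.exp (-(1/2) * Real.log (2 * Real.cos y)) : ℝ) : ℂ) * (-Complex.I * Complex.exp ((y / 2 : ℝ) * Complex.I)) := by
      have e2 : -(1/2) * (((Real.log (2 * Real.cos y) : ℝ) : ℂ) + y * Complex.I) =
        ((-(1/2) * Real.log (2 * Real.cos y) : ℝ) : ℂ) + -((y / 2 : ℝ) * Complex.I) := by push_cast; ring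
      have e3 : ((0:ℝ) : ℂ) + y * Complex.I = (y / 2 : ℝ) * Complex.I + (y / 2 : ℝ) * Complex.I := by push_cast; ring
      rw [e2, Complex.exp_add (((-(1/2) * Real.log (2 * Real.cos y) : ℝ) : ℂ)), Complex.exp_neg]
      rw [show Complex.exp (((0:ℝ):ℂ) + y * Complex.I) = Complex.exp ((y / 2 : ℝ) * Complex.I) * Complex.exp ((y / 2 : ℝ) * Complex.I) by
        rw [e3, Complex.exp_add]]
      have hne := Complex.exp_ne_zero (((y / 2 : ℝ) : ℂ) * Complex.I)
      generalize Complex.exp (((y / 2 : ℝ) : ℂ) * Complex.I) = E at hne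
      rw [Complex.ofReal_mul (y ^ 3), Complex.ofReal_exp]
      generalize Complex.exp ((-(1/2) * Real.log (2 * Real.cos y) : ℝ) : ℂ) = E'
      have : E * E * (E' * E⁻¹) = E * E' := by field_simp
      rw [mul_assoc, this]
      push_cast
      rw [zero_add, mul_pow, Complex.I_pow_three]; ring
    rw [this, Complex.re_ofReal_mul, exp_half_log (by positivity)]
    simp [Complex.exp_ofReal_mul_I_im, -Complex.ofReal_div, -Complex.ofReal_ofNat]
    ring

lemma rect_id {δ : ℝ} (hδ : 0 < δ) (hδ2 : δ < Real.pi / 4) :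
    ∫ y in (0:ℝ)..(Real.pi / 2), (hh ((Real.log (Real.cos δ) : ℝ) + y * Complex.I)).re =
      (∫ φ in δ..(Real.pi / 2 - δ), (LL φ ^ 3 - 3 * Real.pi ^ 2 / 4 * LL φ)) +
      (∫ y in (0:ℝ)..(Real.pi / 2), hh ((Real.log (Real.sin δ) : ℝ) + y * Complex.I)).re := by
  have hpi := Real.pi_pos
  set a := Real.log (Real.sin δ) with ha
  set b := Real.log (Real.cos δ) with hb
  have hs0 : 0 < Real.sin δ := Real.sin_pos_of_pos_of_lt_pi hδ (by linarith)
  have hc0 : 0 < Real.cos δ := Real.cos_pos_of_mem_Ioo ⟨by linarith, by linarith⟩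
  have hc1 : Real.cos δ < 1 := by
    have := Real.cos_lt_cos_of_nonneg_of_le_pi le_rfl (by linarith : δ ≤ Real.pi) hδ
    simpa using this
  have hsc : Real.sin δ < Real.cos δ := by
    rw [← Real.sin_pi_div_two_sub]
    exact Real.sin_lt_sin_of_lt_of_le_pi_div_two (by linarith) (by linarith) (by linarith)
  have hab : a < b := Real.log_lt_log hs0 hsc
  have hb0 : b < 0 := Real.log_neg hc0 hc1
  have hcont : ∀ y : ℝ, ContinuousOn (fun x : ℝ => hh (x + y * Complex.I)) (Set.uIcc a b) := by
    intro y x hx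
    rw [Set.uIcc_of_le hab.le] at hx
    have h1 : ContinuousAt hh (x + y * Complex.I) := (hh_diff (by simp; linarith [hx.2])).continuousAt
    have h2 : ContinuousAt (fun x : ℝ => (x + y * Complex.I : ℂ)) x := by fun_prop
    exact (ContinuousAt.comp (f := fun x : ℝ => (x + y * Complex.I : ℂ)) h1 h2).continuousWithinAt
  have hcontv : ∀ x : ℝ, x < 0 → Continuous (fun y : ℝ => hh (x + y * Complex.I)) := by
    intro x hx
    rw [continuous_iff_continuousAt]
    intro y
    have h1 : ContinuousAt hh (x + y * Complex.I) := (hh_diff (by simp; linarith)).continuousAt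
    have h2 : ContinuousAt (fun y : ℝ => (x + y * Complex.I : ℂ)) y := by fun_prop
    exact ContinuousAt.comp (f := fun y : ℝ => (x + y * Complex.I : ℂ)) h1 h2
  have key := Complex.integral_boundary_rect_eq_zero_of_differentiableOn hh (⟨a, 0⟩ : ℂ) (⟨b, Real.pi / 2⟩ : ℂ) (by
    intro ζ hζ
    have := (Complex.mem_reProdIm.1 hζ).1
    simp only [] at this
    rw [Set.uIcc_of_le hab.le] at this
    exact (hh_diff (by linarith [this.2])).differentiableWithinAt)
  simp only [] at key
  have key2 := congrArg Complex.im key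
  rw [Complex.sub_im, Complex.add_im, Complex.sub_im, smul_eq_mul, smul_eq_mul, Complex.I_mul_im, Complex.I_mul_im, Complex.zero_im] at key2
  have i1 := Complex.imCLM.intervalIntegral_comp_comm ((hcont 0).intervalIntegrable (μ := volume))
  have i2 := Complex.imCLM.intervalIntegral_comp_comm ((hcont (Real.pi / 2)).intervalIntegrable (μ := volume))
  have i3 := Complex.reCLM.intervalIntegral_comp_comm ((hcontv b hb0).intervalIntegrable (μ := volume) 0 (Real.pi / 2))
  simp only [Complex.imCLM_apply, Complex.reCLM_apply] at i1 i2 i3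
  rw [← i1, ← i2, ← i3] at key2
  simp only [hh_bottom, intervalIntegral.integral_zero] at key2
  have i4 : ∫ x in a..b, (hh (x + (Real.pi / 2 : ℝ) * Complex.I)).im =
      ∫ φ in δ..(Real.pi / 2 - δ), (LL φ ^ 3 - 3 * Real.pi ^ 2 / 4 * LL φ) := by
    have hle : δ ≤ Real.pi / 2 - δ := by linarith
    have hsin : ∀ φ ∈ Set.Icc δ (Real.pi / 2 - δ), 0 < Real.sin φ ∧ 0 < Real.cos φ := by
      intro φ hφ
      exact ⟨Real.sin_pos_of_pos_of_lt_pi (by linarith [hφ.1]) (by linarith [hφ.2]),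
        Real.cos_pos_of_mem_Ioo ⟨by linarith [hφ.1], by linarith [hφ.2]⟩⟩
    have hd : ∀ φ ∈ Set.Icc δ (Real.pi / 2 - δ), HasDerivAt LL (Real.cos φ / Real.sin φ) φ := by
      intro φ hφ
      exact (Real.hasDerivAt_sin φ).log (hsin φ hφ).1.ne'
    have sub := intervalIntegral.integral_comp_mul_deriv_of_deriv_nonneg (a := δ) (b := Real.pi / 2 - δ) (f := LL)
      (f' := fun φ => Real.cos φ / Real.sin φ) (g := fun x => (hh (x + (Real.pi / 2 : ℝ) * Complex.I)).im)
      (by rw [Set.uIcc_of_le hle]; exact fun φ hφ => (hd φ hφ).continuousAt.continuousWithinAt)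
      (by rw [min_eq_left hle, max_eq_right hle]; exact fun φ hφ => hd φ (Set.Ioo_subset_Icc_self hφ))
      (by rw [min_eq_left hle, max_eq_right hle]; exact fun φ hφ => by
            have := hsin φ (Set.Ioo_subset_Icc_self hφ)
            exact (div_pos this.2 this.1).le)
    have l1 : LL δ = a := rfl
    have l2 : LL (Real.pi / 2 - δ) = b := by rw [LL, Real.sin_pi_div_two_sub]
    rw [l1, l2] at sub
    rw [← sub]
    apply intervalIntegral.integral_congr
    intro φ hφ
    rw [Set.uIcc_of_le hle] at hφ
    obtain ⟨s1, s2⟩ := hsin φ hφ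
    have hs1 : Real.sin φ < 1 := by
      nlinarith [Real.sin_sq_add_cos_sq φ, mul_pos s2 s2]
    have hL : LL φ < 0 := Real.log_neg s1 hs1
    simp only [Function.comp]
    rw [hh_top hL]
    have e1 : Real.exp (LL φ) = Real.sin φ := Real.exp_log s1
    have e2 : Real.exp (2 * LL φ) = Real.sin φ ^ 2 := by
      rw [two_mul, Real.exp_add, e1]; ring
    have e3 : √(1 - Real.sin φ ^ 2) = Real.cos φ := by
      rw [← Real.cos_sq', Real.sqrt_sq s2.le]
    rw [e1, e2, e3]
    field_simp
  rw [i4] at key2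
  linarith

lemma main_int : ∫ θ in (0:ℝ)..(Real.pi / 2), θ ^ 3 * Real.sin (θ / 2) / √(2 * Real.cos θ) =
    ∫ φ in (0:ℝ)..(Real.pi / 2), (LL φ ^ 3 - 3 * Real.pi ^ 2 / 4 * LL φ) := by
  have hpi := Real.pi_pos
  have hev : ∀ᶠ δ : ℝ in 𝓝[>] 0, 0 < δ ∧ δ < Real.pi / 4 := by
    filter_upwards [self_mem_nhdsWithin, mem_nhdsWithin_of_mem_nhds (Iio_mem_nhds (show (0:ℝ) < Real.pi / 4 by positivity))] with r h1 h2
    exact ⟨h1, h2⟩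
  have hb : Tendsto (fun δ : ℝ => Real.log (Real.cos δ)) (𝓝[>] 0) (𝓝 0) := by
    have : ContinuousAt (fun δ : ℝ => Real.log (Real.cos δ)) 0 :=
      Real.continuous_cos.continuousAt.log (by simp)
    have := this.tendsto
    simp only [Real.cos_zero, Real.log_one] at this
    exact this.mono_left nhdsWithin_le_nhds
  have hblt : ∀ᶠ δ : ℝ in 𝓝[>] 0, Real.log (Real.cos δ) < 0 ∧ -1 < Real.log (Real.cos δ) := by
    filter_upwards [hev, hb (Ioi_mem_nhds (show (-1:ℝ) < 0 by norm_num))] with δ h1 h2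
    refine ⟨Real.log_neg (Real.cos_pos_of_mem_Ioo ⟨by linarith, by linarith⟩) ?_, h2⟩
    have := Real.cos_lt_cos_of_nonneg_of_le_pi le_rfl (by linarith : δ ≤ Real.pi) h1.1
    simpa using this
  -- right edge
  have hR : Tendsto (fun δ : ℝ => ∫ y in (0:ℝ)..(Real.pi / 2), (hh ((Real.log (Real.cos δ) : ℝ) + y * Complex.I)).re) (𝓝[>] 0)
      (𝓝 (∫ θ in (0:ℝ)..(Real.pi / 2), θ ^ 3 * Real.sin (θ / 2) / √(2 * Real.cos θ))) := by
    refine intervalIntegral.tendsto_integral_filter_of_dominated_convergence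
      (fun y => 27 * Real.cos y ^ (-(1/2) : ℝ)) ?_ ?_ (intg_cos.const_mul _) ?_
    · filter_upwards [hblt] with δ h
      refine Continuous.aestronglyMeasurable ?_
      refine Complex.continuous_re.comp ?_
      rw [continuous_iff_continuousAt]
      intro y
      have h1 : ContinuousAt hh ((Real.log (Real.cos δ) : ℝ) + y * Complex.I) := (hh_diff (by
        rw [Complex.add_re, Complex.ofReal_re]; simpa using h.1)).continuousAt
      have h2 : ContinuousAt (fun y : ℝ => ((Real.log (Real.cos δ) : ℝ) + y * Complex.I : ℂ)) y := by fun_prop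
      exact ContinuousAt.comp (f := fun y : ℝ => ((Real.log (Real.cos δ) : ℝ) + y * Complex.I : ℂ)) h1 h2
    · filter_upwards [hblt] with δ h
      filter_upwards [ae_Ioo2] with y h3 hy
      have hy := h3 hy
      have hc : 0 < Real.cos y := Real.cos_pos_of_mem_Ioo ⟨by linarith [hy.1, Real.pi_pos], hy.2⟩
      refine (Complex.abs_re_le_norm _).trans ((hh_bd h.1.le hy).trans ?_)
      refine mul_le_mul_of_nonneg_right ?_ (by positivity)
      have a1 : (-Real.log (Real.cos δ) + 2) ^ 3 ≤ 3 ^ 3 := pow_le_pow_left₀ (by linarith) (by linarith) 3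
      have a2 : Real.exp (Real.log (Real.cos δ)) ≤ 1 := Real.exp_le_one_iff.2 h.1.le
      calc _ ≤ (3:ℝ) ^ 3 * 1 := mul_le_mul a1 a2 (Real.exp_pos _).le (by norm_num)
        _ = 27 := by norm_num
    · filter_upwards [ae_Ioo2] with y h3 hy
      obtain ⟨c1, c2⟩ := hh_right (h3 hy)
      rw [← c2]
      exact c1.tendsto.comp hb
  -- left edge
  have hL : Tendsto (fun δ : ℝ => (∫ y in (0:ℝ)..(Real.pi / 2), hh ((Real.log (Real.sin δ) : ℝ) + y * Complex.I)).re) (𝓝[>] 0) (𝓝 0) := by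
    have ha : Tendsto (fun δ : ℝ => Real.log (Real.sin δ)) (𝓝[>] 0) atBot := by
      refine Real.tendsto_log_nhdsGT_zero.comp ?_
      refine tendsto_nhdsWithin_iff.2 ⟨?_, ?_⟩
      · have := Real.continuous_sin.continuousAt (x := 0) |>.tendsto
        rw [Real.sin_zero] at this
        exact this.mono_left nhdsWithin_le_nhds
      · filter_upwards [hev] with δ h
        exact Real.sin_pos_of_pos_of_lt_pi h.1 (by linarith)
    have hlim : Tendsto (fun x : ℝ => ((-x + 2) ^ 3 * Real.exp x) * ∫ y in (0:ℝ)..(Real.pi / 2), Real.cos y ^ (-(1/2) : ℝ)) atBot (𝓝 0) := by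
      have h1 : Tendsto (fun x : ℝ => -x + 2) atBot atTop :=
        tendsto_atTop_add_const_right _ _ tendsto_neg_atBot_atTop
      have h2 := (Real.tendsto_pow_mul_exp_neg_atTop_nhds_zero 3).comp h1
      have h3 := (h2.mul_const (Real.exp 2)).mul_const (∫ y in (0:ℝ)..(Real.pi / 2), Real.cos y ^ (-(1/2) : ℝ))
      simp only [zero_mul] at h3
      refine h3.congr fun x => ?_
      simp only [Function.comp]
      rw [mul_assoc ((-x + 2) ^ 3), ← Real.exp_add]
      congr 3; ring
    refine squeeze_zero_norm' ?_ (hlim.comp ha)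
    filter_upwards [hev] with δ h
    refine (Complex.abs_re_le_norm _).trans ?_
    simp only [Function.comp]
    rw [← intervalIntegral.integral_const_mul]
    refine intervalIntegral.norm_integral_le_of_norm_le (by positivity) ?_ (intg_cos.const_mul _)
    filter_upwards [ae_Ioo2] with y h3 hy
    rw [Set.uIoc_of_le (by positivity)] at h3
    refine hh_bd ?_ (h3 hy)
    exact Real.log_nonpos (Real.sin_nonneg_of_nonneg_of_le_pi h.1.le (by linarith)) (Real.sin_le_one _)
  -- top edge
  have hT : Tendsto (fun δ : ℝ => ∫ φ in δ..(Real.pi / 2 - δ), (LL φ ^ 3 - 3 * Real.pi ^ 2 / 4 * LL φ)) (𝓝[>] 0)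
      (𝓝 (∫ φ in (0:ℝ)..(Real.pi / 2), (LL φ ^ 3 - 3 * Real.pi ^ 2 / 4 * LL φ))) := by
    have hi := LL_final.1
    have hP := intervalIntegral.continuousOn_primitive_interval' hi (Set.left_mem_uIcc)
    rw [Set.uIcc_of_le (by positivity)] at hP
    have t1 : Tendsto (fun δ : ℝ => δ) (𝓝[>] 0) (𝓝[Set.Icc 0 (Real.pi / 2)] 0) := by
      refine tendsto_nhdsWithin_iff.2 ⟨tendsto_id.mono_left nhdsWithin_le_nhds, ?_⟩
      filter_upwards [hev] with δ h
      exact ⟨h.1.le, by linarith⟩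
    have t2 : Tendsto (fun δ : ℝ => Real.pi / 2 - δ) (𝓝[>] 0) (𝓝[Set.Icc 0 (Real.pi / 2)] (Real.pi / 2)) := by
      refine tendsto_nhdsWithin_iff.2 ⟨?_, ?_⟩
      · have : ContinuousAt (fun δ : ℝ => Real.pi / 2 - δ) 0 := by fun_prop
        have := this.tendsto
        rw [sub_zero] at this
        exact this.mono_left nhdsWithin_le_nhds
      · filter_upwards [hev] with δ h
        exact ⟨by linarith, by linarith⟩
    have q1 := (hP 0 ⟨le_rfl, by positivity⟩).tendsto.comp t1
    have q2 := (hP (Real.pi / 2) ⟨by positivity, le_rfl⟩).tendsto.comp t2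
    have q := q2.sub q1
    simp only [intervalIntegral.integral_same, sub_zero] at q
    refine q.congr' ?_
    filter_upwards [hev] with δ h
    simp only [Function.comp]
    have hsub : ∀ x ∈ Set.Icc 0 (Real.pi / 2), IntervalIntegrable (fun φ => LL φ ^ 3 - 3 * Real.pi ^ 2 / 4 * LL φ) volume 0 x := by
      intro x hx
      refine hi.mono_set ?_
      rw [Set.uIcc_of_le hx.1, Set.uIcc_of_le (by positivity)]
      exact Set.Icc_subset_Icc le_rfl hx.2
    exact intervalIntegral.integral_interval_sub_left (hsub _ ⟨by linarith, by linarith⟩) (hsub _ ⟨h.1.le, by linarith⟩)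
  have hsum := hT.add hL
  rw [add_zero] at hsum
  refine tendsto_nhds_unique hR (hsum.congr' ?_)
  filter_upwards [hev] with δ h
  exact (rect_id h.1 h.2).symm

/- STATEMENT 13: `Ω_{2,1,1,1} = (iπ³/12) log 2 - (iπ/6)(log 2)³ - (iπ/4) ζ(3)`. -/
theorem stmt_13 :
    Omega [F₂, F₁, F₁, F₁] 1 =
      Complex.I * (Real.pi : ℂ) ^ 3 / 12 * ((Real.log 2 : ℝ) : ℂ) -
        Complex.I * (Real.pi : ℂ) / 6 * ((Real.log 2 : ℝ) : ℂ) ^ 3 -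
        Complex.I * (Real.pi : ℂ) / 4 * riemannZeta 3 := by
  have h := subst_t
  rw [main_int, LL_final.2] at h
  rw [Omega_eq2, zeta3_eq]
  have e : 8 * √2 / 3 * ∫ t in (0:ℝ)..1, (1 - t ^ 2) / (1 + t ^ 4) * (Real.pi / 4 - Real.arctan (t ^ 2)) ^ 3 =
      Real.pi ^ 3 / 12 * Real.log 2 - Real.pi / 6 * Real.log 2 ^ 3 - Real.pi / 4 * zeta3 := by
    linarith
  rw [e]
  push_cast
  ring
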